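/- Assume that for all real t₀ < t₁ there exists t ∈ (t₀, t₁) with rank Θ_n(t) = n (total controllability on every interval). Let s ∈ ℝ, let Π_s be a symmetric n×n matrix, and let I_s ⊂ ℝ be the maximal interval of existence of the solution of the Riccati equation Π' = −AᵀΠ − ΠA + ΠBBᵀΠ − Q with Π(s) = Π_s. Then I_s = (t₀*, t₁*) where t₀* = inf{t : t < s, −Φ₁₂(t,s)⁻¹Φ₁₁(t,s) ≺ Π_s} and t₁* = sup{t : t > s, −Φ₁₂(t,s)⁻¹Φ₁₁(t,s) ≻ Π_s} (infimum and supremum taken in the extended reals). -/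

import Mathlib

/-!
Write `R = B Bᵀ`, let `(Y, Z)` be the second block column of `Φ(·, s)`, so `Y = Φ₁₂`, and let
`(U, V) = Φ(·, s) (1, Ps)`, so `U = Φ₁₁ + Φ₁₂ Ps`. The symplectic form is conserved by the
Hamiltonian flow (`IsHamSol.wronskian`), which gives `Uᵀ Z - Vᵀ Y = 1`, `Uᵀ V = Vᵀ U` and
`Yᵀ Z = Zᵀ Y`. From these identities (`IsHamSol.hasDerivAt_inv_mul`),
`(Y⁻¹ U)' = Y⁻¹ R Y⁻ᵀ` and `(U⁻¹ Y)' = -U⁻¹ R U⁻ᵀ` wherever the inverses exist.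

*No conjugate points.* `Y t` is invertible for `t ≠ s` (`IsHamSol.isUnit_of_ne`). If `Y t x = 0`,
then `u = Y x`, `v = Z x` satisfy `(u ⬝ v)' = -(|Bᵀ v|² + uᵀ Q u)` and `u ⬝ v` vanishes at both
ends, so `Bᵀ v = 0` and `Q u = 0` in between. Differentiating `Bᵀ v = 0` repeatedly gives
`Γ_kᵀ v = 0` for all `k < n`; total controllability then makes `v` vanish on a dense subset, and
`x = v(s) = 0`.

*Existence.* For `t ≠ s`, `-Y⁻¹ Φ₁₁ - Ps = -Y⁻¹ U`. Since `Y⁻¹ U` is nondecreasing on each side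
of `s`, definiteness at one point passes to every point between it and `s`. Hence `U` is invertible
on `(t₀, t₁)`, and `V U⁻¹` solves the Riccati equation there (`IsHamSol.isRiccatiSolAt`).

*Maximality.* If `P` is a Riccati solution on `(a, b)` through `Ps`, then `V - P U` solves a linear
equation with zero initial value, so `V = P U` and the first identity reads `Uᵀ (Z - Pᵀ Y) = 1`.
Thus `U` is invertible on `(a, b)` (`IsHamSol.isUnit_of_riccati`). Now `U⁻¹ Y` is symmetric, zero at
`s`, nonincreasing, and invertible off `s`; so it is negative definite to the right of `s` and
positive definite to the left. Its inverse is `Y⁻¹ U`, so every point of `(a, b)` other than `s`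
belongs to one of the two sets defining `t₀` and `t₁`.
-/

open Matrix

/-- `IsSTM F Φ`: `Φ` is the state transition matrix of `F`, i.e. for each fixed `s`,
`t ↦ Φ t s` solves `X' = F t * X`, `X s = 1` (derivatives taken entrywise). -/
def IsSTM {ι : Type*} [Fintype ι] [DecidableEq ι] (F : ℝ → Matrix ι ι ℝ)
    (Φ : ℝ → ℝ → Matrix ι ι ℝ) : Prop :=
  (∀ s : ℝ, Φ s s = 1) ∧
  ∀ (s t : ℝ) (i j : ι), HasDerivAt (fun t' : ℝ => Φ t' s i j) ((F t * Φ t s) i j) t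

/-- `IsCtrbMatSeq A B Γ`: `Γ 0 = B` and `Γ k = -A Γ (k-1) + Γ' (k-1)` for `1 ≤ k ≤ n`,
i.e. the derivative of each entry of `Γ k` is the corresponding entry of `Γ (k+1) + A * Γ k`,
for `k < n`. -/
def IsCtrbMatSeq {n p : ℕ} (A : ℝ → Matrix (Fin n) (Fin n) ℝ)
    (B : ℝ → Matrix (Fin n) (Fin p) ℝ) (Γ : ℕ → ℝ → Matrix (Fin n) (Fin p) ℝ) : Prop :=
  Γ 0 = B ∧
  ∀ k < n, ∀ (t : ℝ) (i : Fin n) (j : Fin p),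
    HasDerivAt (fun τ : ℝ => Γ k τ i j) ((Γ (k + 1) t + A t * Γ k t) i j) t

/-- The controllability matrix `Θₙ(t) = [Γ₀(t) Γ₁(t) ⋯ Γ_{n−1}(t)]`. -/
def ctrbMat {n p : ℕ} (Γ : ℕ → ℝ → Matrix (Fin n) (Fin p) ℝ) (t : ℝ) :
    Matrix (Fin n) (Fin n × Fin p) ℝ :=
  Matrix.of fun i kj => Γ (kj.1 : ℕ) t i kj.2

/-- Total controllability of `(A(t), B(t))` on `[0,1]`. -/
def TotallyControllable {n p : ℕ} (Γ : ℕ → ℝ → Matrix (Fin n) (Fin p) ℝ) : Prop :=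
  ∀ t₀ t₁ : ℝ, 0 ≤ t₀ → t₀ < t₁ → t₁ ≤ 1 →
    ∃ t ∈ Set.Ioo t₀ t₁, (ctrbMat Γ t).rank = n


/-- `P` solves the Riccati equation `P' = -AᵀP - PA + PBBᵀP - Q` at the point `t`
(derivatives taken entrywise). -/
def IsRiccatiSolAt {n p : ℕ} (A Q : ℝ → Matrix (Fin n) (Fin n) ℝ)
    (B : ℝ → Matrix (Fin n) (Fin p) ℝ) (P : ℝ → Matrix (Fin n) (Fin n) ℝ)
    (t : ℝ) : Prop :=
  ∀ (i j : Fin n),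
    HasDerivAt (fun τ : ℝ => P τ i j)
      ((-(A t)ᵀ * P t - P t * A t + P t * (B t * (B t)ᵀ) * P t - Q t) i j) t

section Aux

attribute [local instance] Matrix.linftyOpNormedRing Matrix.linftyOpNormedAlgebra

variable {n p : ℕ}

/-! ### Calculus of matrix-valued functions -/

/-- Differentiability for the operator norm (which makes square matrices a normed algebra) is
entrywise differentiability. -/
lemma hasDerivAt_matrix_iff (F : ℝ → Matrix (Fin n) (Fin n) ℝ) (F' : Matrix (Fin n) (Fin n) ℝ)
    (t : ℝ) : HasDerivAt F F' t ↔ ∀ i j, HasDerivAt (fun τ => F τ i j) (F' i j) t := by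
  constructor
  · intro h i j
    exact (LinearMap.toContinuousLinearMap
      (Matrix.entryLinearMap ℝ ℝ i j)).hasFDerivAt.comp_hasDerivAt t h
  · intro h
    have h2 : HasDerivAt (fun τ => ∑ i, ∑ j, F τ i j • Matrix.single i j (1 : ℝ))
        (∑ i, ∑ j, F' i j • Matrix.single i j (1 : ℝ)) t :=
      HasDerivAt.fun_sum fun i _ => HasDerivAt.fun_sum fun j _ => (h i j).smul_const _
    have key : ∀ M : Matrix (Fin n) (Fin n) ℝ,
        ∑ i, ∑ j, M i j • Matrix.single i j (1 : ℝ) = M := by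
      intro M
      conv_rhs => rw [Matrix.matrix_eq_sum_single M]
      simp [Matrix.smul_single]
    simpa only [key] using h2

lemma continuous_matrix_of_entries {F : ℝ → Matrix (Fin n) (Fin n) ℝ}
    (h : ∀ i j, Continuous fun t => F t i j) : Continuous F :=
  continuous_pi fun i => continuous_pi fun j => h i j

lemma hasDerivAt_transpose {F : ℝ → Matrix (Fin n) (Fin n) ℝ} {F' : Matrix (Fin n) (Fin n) ℝ}
    {t : ℝ} (h : HasDerivAt F F' t) : HasDerivAt (fun τ => (F τ)ᵀ) F'ᵀ t := by
  rw [hasDerivAt_matrix_iff] at h ⊢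
  exact fun i j => h j i

lemma hasDerivAt_quadForm {F : ℝ → Matrix (Fin n) (Fin n) ℝ} {F' : Matrix (Fin n) (Fin n) ℝ}
    {t : ℝ} (h : HasDerivAt F F' t) (x : Fin n → ℝ) :
    HasDerivAt (fun τ => x ⬝ᵥ (F τ *ᵥ x)) (x ⬝ᵥ (F' *ᵥ x)) t := by
  rw [hasDerivAt_matrix_iff] at h
  simp only [dotProduct, mulVec]
  exact HasDerivAt.fun_sum fun i _ =>
    (HasDerivAt.fun_sum fun j _ => (h i j).mul_const (x j)).const_mul (x i)

lemma hasDerivAt_congr_deriv {F : ℝ → Matrix (Fin n) (Fin n) ℝ} {F' F'' : Matrix (Fin n) (Fin n) ℝ}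
    {t : ℝ} (h : HasDerivAt F F' t) (e : F' = F'') : HasDerivAt F F'' t := e ▸ h

lemma hasDerivAt_matrix_mul {F G : ℝ → Matrix (Fin n) (Fin n) ℝ}
    {F' G' : Matrix (Fin n) (Fin n) ℝ} {t : ℝ} (hF : HasDerivAt F F' t) (hG : HasDerivAt G G' t) :
    HasDerivAt (fun τ => F τ * G τ) (F' * G t + F t * G') t :=
  hF.mul hG

lemma hasDerivAt_matrix_sub {F G : ℝ → Matrix (Fin n) (Fin n) ℝ}
    {F' G' : Matrix (Fin n) (Fin n) ℝ} {t : ℝ} (hF : HasDerivAt F F' t) (hG : HasDerivAt G G' t) :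
    HasDerivAt (fun τ => F τ - G τ) (F' - G') t :=
  hF.sub hG

lemma hasDerivAt_nonsing_inv {F : ℝ → Matrix (Fin n) (Fin n) ℝ}
    {F' : Matrix (Fin n) (Fin n) ℝ} {t : ℝ} (h : HasDerivAt F F' t) (hu : IsUnit (F t)) :
    HasDerivAt (fun τ => (F τ)⁻¹) (-((F t)⁻¹ * F' * (F t)⁻¹)) t := by
  obtain ⟨u, hu⟩ := hu
  have h1 := hasFDerivAt_ringInverse (𝕜 := ℝ) u
  rw [hu] at h1
  have h2 := h1.comp_hasDerivAt t h
  have e : ((u⁻¹ : (Matrix (Fin n) (Fin n) ℝ)ˣ) : Matrix (Fin n) (Fin n) ℝ) = (F t)⁻¹ := by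
    rw [← hu, Matrix.coe_units_inv]
  have h3 : HasDerivAt (fun τ => Ring.inverse (F τ)) (-((F t)⁻¹ * F' * (F t)⁻¹)) t := by
    refine (hasDerivAt_congr_deriv h2 ?_)
    simp [e]
  simpa only [Matrix.nonsing_inv_eq_ringInverse] using h3

/-! ### Hamiltonian system: conserved form and monotone quotients -/

/-- `(U, V)` is a matrix solution of the Hamiltonian system
`U' = A U - B Bᵀ V`, `V' = -Q U - Aᵀ V`. -/
def IsHamSol (A Q : ℝ → Matrix (Fin n) (Fin n) ℝ) (B : ℝ → Matrix (Fin n) (Fin p) ℝ)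
    (U V : ℝ → Matrix (Fin n) (Fin n) ℝ) : Prop :=
  ∀ t, HasDerivAt U (A t * U t - (B t * (B t)ᵀ) * V t) t ∧
    HasDerivAt V (-(Q t * U t) - (A t)ᵀ * V t) t

variable {A Q : ℝ → Matrix (Fin n) (Fin n) ℝ} {B : ℝ → Matrix (Fin n) (Fin p) ℝ}

/-- Conservation of the symplectic form along the Hamiltonian flow. -/
lemma IsHamSol.wronskian (hQ : ∀ t, (Q t)ᵀ = Q t) {U₁ V₁ U₂ V₂ : ℝ → Matrix (Fin n) (Fin n) ℝ}
    (h₁ : IsHamSol A Q B U₁ V₁) (h₂ : IsHamSol A Q B U₂ V₂) (s t : ℝ) :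
    (U₁ t)ᵀ * V₂ t - (V₁ t)ᵀ * U₂ t = (U₁ s)ᵀ * V₂ s - (V₁ s)ᵀ * U₂ s := by
  have hd : ∀ t, HasDerivAt (fun t => (U₁ t)ᵀ * V₂ t - (V₁ t)ᵀ * U₂ t) 0 t := by
    intro t
    refine hasDerivAt_congr_deriv (hasDerivAt_matrix_sub
      (hasDerivAt_matrix_mul (hasDerivAt_transpose (h₁ t).1) (h₂ t).2)
      (hasDerivAt_matrix_mul (hasDerivAt_transpose (h₁ t).2) (h₂ t).1)) ?_
    simp only [transpose_sub, transpose_mul, transpose_transpose, transpose_neg, hQ]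
    noncomm_ring
  exact is_const_of_deriv_eq_zero (fun t => (hd t).differentiableAt) (fun t => (hd t).deriv) t s

/-- For two matrix solutions with `U₁ᵀV₁` symmetric and constant Wronskian `c • 1`, the derivative
of `U₁⁻¹ U₂` is the congruence `-c • U₁⁻¹ B Bᵀ U₁⁻ᵀ`. This single formula gives all the
monotonicity used below. -/
lemma IsHamSol.hasDerivAt_inv_mul {U₁ V₁ U₂ V₂ : ℝ → Matrix (Fin n) (Fin n) ℝ}
    (h₁ : IsHamSol A Q B U₁ V₁) (h₂ : IsHamSol A Q B U₂ V₂) {t c : ℝ} (hu : IsUnit (U₁ t))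
    (hsym : (U₁ t)ᵀ * V₁ t = (V₁ t)ᵀ * U₁ t)
    (hw : (U₁ t)ᵀ * V₂ t - (V₁ t)ᵀ * U₂ t = c • (1 : Matrix (Fin n) (Fin n) ℝ)) :
    HasDerivAt (fun τ => (U₁ τ)⁻¹ * U₂ τ)
      (-(c • ((U₁ t)⁻¹ * (B t * (B t)ᵀ) * ((U₁ t)⁻¹)ᵀ))) t := by
  refine hasDerivAt_congr_deriv
    (hasDerivAt_matrix_mul (hasDerivAt_nonsing_inv (h₁ t).1 hu) (h₂ t).1) ?_
  have hdet : IsUnit (U₁ t).det := (Matrix.isUnit_iff_isUnit_det _).1 hu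
  generalize A t = a at *
  generalize B t * (B t)ᵀ = r at *
  generalize U₁ t = u at *
  generalize V₁ t = v at *
  generalize U₂ t = u2 at *
  generalize V₂ t = v2 at *
  have i1 : u⁻¹ * u = 1 := Matrix.nonsing_inv_mul _ hdet
  have i2 : u * u⁻¹ = 1 := Matrix.mul_nonsing_inv _ hdet
  have i3 : (u⁻¹)ᵀ * uᵀ = 1 := by rw [← transpose_mul, i2, transpose_one]
  -- `V₁ U₁⁻¹` is symmetric
  have e1 : v * u⁻¹ = (u⁻¹)ᵀ * vᵀ := by
    calc v * u⁻¹ = ((u⁻¹)ᵀ * uᵀ) * v * u⁻¹ := by rw [i3, one_mul]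
      _ = (u⁻¹)ᵀ * (uᵀ * v) * u⁻¹ := by simp only [mul_assoc]
      _ = (u⁻¹)ᵀ * vᵀ * (u * u⁻¹) := by rw [hsym]; simp only [mul_assoc]
      _ = _ := by rw [i2, mul_one]
  have e2 : v2 - v * u⁻¹ * u2 = c • (u⁻¹)ᵀ := by
    calc v2 - v * u⁻¹ * u2 = ((u⁻¹)ᵀ * uᵀ) * v2 - (u⁻¹)ᵀ * vᵀ * u2 := by rw [i3, one_mul, e1]
      _ = (u⁻¹)ᵀ * (uᵀ * v2 - vᵀ * u2) := by noncomm_ring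
      _ = _ := by rw [hw]; simp
  have e3 : u⁻¹ * (a * u - r * v) * u⁻¹ * u2 = u⁻¹ * a * u2 - u⁻¹ * r * (v * u⁻¹ * u2) := by
    calc _ = u⁻¹ * a * (u * u⁻¹) * u2 - u⁻¹ * r * (v * u⁻¹ * u2) := by noncomm_ring
      _ = _ := by rw [i2, mul_one]
  rw [neg_mul, e3]
  calc _ = -(u⁻¹ * r * (v2 - v * u⁻¹ * u2)) := by noncomm_ring
    _ = -(c • (u⁻¹ * r * (u⁻¹)ᵀ)) := by rw [e2]; simp

lemma quadForm_congr_nonneg (M : Matrix (Fin n) (Fin n) ℝ) (b : Matrix (Fin n) (Fin p) ℝ)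
    (x : Fin n → ℝ) : 0 ≤ x ⬝ᵥ ((M * (b * bᵀ) * Mᵀ) *ᵥ x) := by
  have : M * (b * bᵀ) * Mᵀ = (M * b) * (M * b)ᴴ := by
    simp [Matrix.mul_assoc]
  rw [this]
  simpa using (Matrix.posSemidef_self_mul_conjTranspose (M * b)).dotProduct_mulVec_nonneg x

lemma le_of_hasDerivAt_nonneg {f f' : ℝ → ℝ} {a b : ℝ} (hab : a ≤ b)
    (h : ∀ t ∈ Set.Icc a b, HasDerivAt f (f' t) t) (h0 : ∀ t ∈ Set.Icc a b, 0 ≤ f' t) :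
    f a ≤ f b :=
  monotoneOn_of_hasDerivWithinAt_nonneg (convex_Icc a b)
    (fun t ht => (h t ht).continuousAt.continuousWithinAt)
    (fun t ht => (h t (interior_subset ht)).hasDerivWithinAt)
    (fun t ht => h0 t (interior_subset ht)) (Set.left_mem_Icc.2 hab) (Set.right_mem_Icc.2 hab) hab

/-- A solution of `E' = K E` on an interval that vanishes at one point vanishes identically. -/
lemma linear_ode_zero {K E : ℝ → Matrix (Fin n) (Fin n) ℝ} {a b s t : ℝ}
    (hK : ContinuousOn K (Set.Icc a b)) (hE : ∀ τ ∈ Set.Ioo a b, HasDerivAt E (K τ * E τ) τ)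
    (hs : s ∈ Set.Ioo a b) (h0 : E s = 0) (ht : t ∈ Set.Ioo a b) : E t = 0 := by
  obtain ⟨C, hC⟩ := isCompact_Icc.exists_bound_of_continuousOn hK
  have := ODE_solution_unique_of_mem_Ioo (v := fun τ X => K τ * X) (s := fun _ => Set.univ)
    (K := C.toNNReal) (f := E) (g := fun _ => 0) (a := a) (b := b) (t₀ := s) ?_ hs
    (fun τ hτ => ⟨hE τ hτ, trivial⟩)
    (fun τ hτ => ⟨by simpa using hasDerivAt_const τ (0 : Matrix (Fin n) (Fin n) ℝ), trivial⟩) h0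
  · exact this ht
  · intro τ hτ
    refine LipschitzOnWith.of_dist_le_mul fun X _ Y _ => ?_
    rw [dist_eq_norm, dist_eq_norm, ← mul_sub]
    refine (norm_mul_le _ _).trans ?_
    gcongr
    exact (hC τ (Set.Ioo_subset_Icc_self hτ)).trans (Real.le_coe_toNNReal C)


/-! ### Absence of conjugate points -/

lemma eq_zero_of_vecMul_eq_zero_of_rank {ι : Type*} [Fintype ι] {M : Matrix (Fin n) ι ℝ}
    (hM : M.rank = n) {v : Fin n → ℝ} (hv : v ᵥ* M = 0) : v = 0 := by
  have htop : LinearMap.range M.mulVecLin = ⊤ :=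
    Submodule.eq_top_of_finrank_eq (by rw [← Matrix.rank, hM]; simp)
  obtain ⟨y, hy⟩ := LinearMap.range_eq_top.1 htop v
  rw [← dotProduct_self_eq_zero]
  nth_rewrite 2 [← hy]
  rw [Matrix.mulVecLin_apply, dotProduct_mulVec, hv, zero_dotProduct]

/-- If the first component of a Hamiltonian trajectory vanishes at both ends of `[a, b]`, then
its control `Bᵀ v` and its running cost vanish on `(a, b)`: the pairing `u ⬝ v` is antitone with
derivative `-(|Bᵀ v|² + uᵀ Q u)` and is zero at both ends. -/
lemma IsHamSol.vanish_of_boundary (hQpsd : ∀ t, (Q t).PosSemidef)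
    {Y Z : ℝ → Matrix (Fin n) (Fin n) ℝ} (h : IsHamSol A Q B Y Z) {a b : ℝ} (x : Fin n → ℝ)
    (ha : Y a *ᵥ x = 0) (hb : Y b *ᵥ x = 0) {τ : ℝ} (hτ : τ ∈ Set.Ioo a b) :
    (B τ)ᵀ *ᵥ (Z τ *ᵥ x) = 0 ∧ Q τ *ᵥ (Y τ *ᵥ x) = 0 := by
  have hQ : ∀ t, (Q t)ᵀ = Q t := fun t => by simpa using (hQpsd t).1.eq
  set D : ℝ → ℝ := fun t => ((B t)ᵀ *ᵥ (Z t *ᵥ x)) ⬝ᵥ ((B t)ᵀ *ᵥ (Z t *ᵥ x))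
    + (Y t *ᵥ x) ⬝ᵥ (Q t *ᵥ (Y t *ᵥ x)) with hD
  have hD1 : ∀ t, 0 ≤ ((B t)ᵀ *ᵥ (Z t *ᵥ x)) ⬝ᵥ ((B t)ᵀ *ᵥ (Z t *ᵥ x)) := fun t =>
    Finset.sum_nonneg fun i _ => mul_self_nonneg _
  have hD2 : ∀ t, 0 ≤ (Y t *ᵥ x) ⬝ᵥ (Q t *ᵥ (Y t *ᵥ x)) := fun t => by
    simpa using (hQpsd t).dotProduct_mulVec_nonneg (Y t *ᵥ x)
  have hg : ∀ t, HasDerivAt (fun t => -(x ⬝ᵥ (((Y t)ᵀ * Z t) *ᵥ x))) (D t) t := by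
    intro t
    have h1 := (hasDerivAt_quadForm
      (hasDerivAt_matrix_mul (hasDerivAt_transpose (h t).1) (h t).2) x).neg
    refine h1.congr_deriv ?_
    have e : (A t * Y t - B t * (B t)ᵀ * Z t)ᵀ * Z t + (Y t)ᵀ * (-(Q t * Y t) - (A t)ᵀ * Z t)
        = -((Z t)ᵀ * (B t * ((B t)ᵀ * Z t)) + (Y t)ᵀ * (Q t * Y t)) := by
      simp only [transpose_sub, transpose_mul, transpose_transpose, Matrix.sub_mul, Matrix.mul_sub,
        Matrix.mul_neg, Matrix.mul_assoc]
      abel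
    rw [e, hD, neg_mulVec, dotProduct_neg, neg_neg, add_mulVec, dotProduct_add]
    simp only [← mulVec_mulVec]
    congr 1
    · rw [dotProduct_mulVec, vecMul_transpose, dotProduct_mulVec, ← mulVec_transpose]
    · rw [dotProduct_mulVec, vecMul_transpose]
  have hga : x ⬝ᵥ (((Y a)ᵀ * Z a) *ᵥ x) = 0 := by
    rw [← mulVec_mulVec, dotProduct_mulVec, vecMul_transpose, ha, zero_dotProduct]
  have hgb : x ⬝ᵥ (((Y b)ᵀ * Z b) *ᵥ x) = 0 := by
    rw [← mulVec_mulVec, dotProduct_mulVec, vecMul_transpose, hb, zero_dotProduct]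
  have hmono : Monotone (fun t => -(x ⬝ᵥ (((Y t)ᵀ * Z t) *ᵥ x))) := fun t t' htt' =>
    le_of_hasDerivAt_nonneg (f := fun t => -(x ⬝ᵥ (((Y t)ᵀ * Z t) *ᵥ x))) htt'
      (fun r _ => hg r) (fun r _ => add_nonneg (hD1 r) (hD2 r))
  have hz : ∀ t ∈ Set.Ioo a b, -(x ⬝ᵥ (((Y t)ᵀ * Z t) *ᵥ x)) = 0 := by
    intro t ht
    have h1 := hmono ht.1.le
    have h2 := hmono ht.2.le
    simp only [hga, hgb, neg_zero] at h1 h2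
    exact le_antisymm h2 h1
  have hd0 : D τ = 0 := by
    refine (hg τ).unique ((hasDerivAt_const τ (0 : ℝ)).congr_of_eventuallyEq ?_)
    filter_upwards [isOpen_Ioo.mem_nhds hτ] with t ht using hz t ht
  have hb1 := hD1 τ
  have hb2 := hD2 τ
  simp only [hD] at hd0
  constructor
  · exact dotProduct_self_eq_zero.1 (by linarith)
  · refine ((hQpsd τ).dotProduct_mulVec_zero_iff _).1 ?_
    simp only [star_trivial]
    linarith

/-- Under total controllability, the trajectory of `vanish_of_boundary` has vanishing costate
on the whole closed interval. -/
lemma IsHamSol.costate_eq_zero (hQpsd : ∀ t, (Q t).PosSemidef)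
    {Γ : ℕ → ℝ → Matrix (Fin n) (Fin p) ℝ} (hΓ : IsCtrbMatSeq A B Γ)
    (hTC : ∀ t₀ t₁ : ℝ, t₀ < t₁ → ∃ t ∈ Set.Ioo t₀ t₁, (ctrbMat Γ t).rank = n)
    {Y Z : ℝ → Matrix (Fin n) (Fin n) ℝ} (h : IsHamSol A Q B Y Z) {a b : ℝ} (hab : a < b)
    (x : Fin n → ℝ) (ha : Y a *ᵥ x = 0) (hb : Y b *ᵥ x = 0) :
    Z a *ᵥ x = 0 ∧ Z b *ᵥ x = 0 := by
  have hv := fun τ (hτ : τ ∈ Set.Ioo a b) => h.vanish_of_boundary hQpsd x ha hb hτ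
  have hZ : ∀ τ i, HasDerivAt (fun t => (Z t *ᵥ x) i)
      (((-(Q τ * Y τ) - (A τ)ᵀ * Z τ) *ᵥ x) i) τ := by
    intro τ i
    have := (hasDerivAt_matrix_iff _ _ _).1 (h τ).2
    simp only [mulVec, dotProduct]
    exact HasDerivAt.fun_sum fun j _ => (this i j).mul_const (x j)
  have hZ' : ∀ τ ∈ Set.Ioo a b, ∀ i, HasDerivAt (fun t => (Z t *ᵥ x) i)
      (-(((A τ)ᵀ *ᵥ (Z τ *ᵥ x)) i)) τ := by
    intro τ hτ i
    refine (hZ τ i).congr_deriv ?_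
    rw [sub_mulVec, neg_mulVec, ← mulVec_mulVec, ← mulVec_mulVec, (hv τ hτ).2]
    simp
  have hk : ∀ k < n, ∀ τ ∈ Set.Ioo a b, (Γ k τ)ᵀ *ᵥ (Z τ *ᵥ x) = 0 := by
    intro k
    induction k with
    | zero => intro _ τ hτ; rw [hΓ.1]; exact (hv τ hτ).1
    | succ k ih =>
      intro hkn τ hτ
      have ih := ih (by omega)
      funext j
      have h1 : HasDerivAt (fun t => ((Γ k t)ᵀ *ᵥ (Z t *ᵥ x)) j)
          (∑ i, ((Γ (k + 1) τ + A τ * Γ k τ) i j * (Z τ *ᵥ x) i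
            + Γ k τ i j * -(((A τ)ᵀ *ᵥ (Z τ *ᵥ x)) i))) τ := by
        have : (fun t => ((Γ k t)ᵀ *ᵥ (Z t *ᵥ x)) j) =
            fun t => ∑ i, Γ k t i j * (Z t *ᵥ x) i := by
          funext t; simp [mulVec, dotProduct]
        rw [this]
        exact HasDerivAt.fun_sum fun i _ =>
          (hΓ.2 k (by omega) τ i j).mul (hZ' τ hτ i)
      have h2 : HasDerivAt (fun t => ((Γ k t)ᵀ *ᵥ (Z t *ᵥ x)) j) 0 τ := by
        refine (hasDerivAt_const τ (0 : ℝ)).congr_of_eventuallyEq ?_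
        filter_upwards [isOpen_Ioo.mem_nhds hτ] with t ht
        rw [ih t ht]; rfl
      have h3 := h1.unique h2
      have h4 : ((Γ (k + 1) τ + A τ * Γ k τ)ᵀ *ᵥ (Z τ *ᵥ x)) j
          - ((Γ k τ)ᵀ *ᵥ ((A τ)ᵀ *ᵥ (Z τ *ᵥ x))) j = 0 := by
        rw [← h3, Finset.sum_add_distrib]
        simp only [mul_neg, Finset.sum_neg_distrib, ← sub_eq_add_neg]
        rfl
      rw [transpose_add, transpose_mul, add_mulVec, ← mulVec_mulVec] at h4
      simpa using h4
  have hzero : ∀ τ ∈ Set.Ioo a b, (ctrbMat Γ τ).rank = n → Z τ *ᵥ x = 0 := by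
    intro τ hτ hr
    refine eq_zero_of_vecMul_eq_zero_of_rank hr ?_
    funext ⟨k, j⟩
    have := congrFun (hk k k.2 τ hτ) j
    rw [mulVec_transpose] at this
    exact this
  have hcont : Continuous fun t => Z t *ᵥ x :=
    continuous_pi fun i => continuous_iff_continuousAt.2 fun t => (hZ t i).continuousAt
  have hcl : IsClosed {t | Z t *ᵥ x = 0} := isClosed_eq hcont continuous_const
  have hIoo : Set.Ioo a b ⊆ {t | Z t *ᵥ x = 0} := by
    intro t ht
    have hsub : {τ | τ ∈ Set.Ioo a b ∧ (ctrbMat Γ τ).rank = n} ⊆ {t | Z t *ᵥ x = 0} :=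
      fun τ hτ => hzero τ hτ.1 hτ.2
    refine hcl.closure_subset_iff.2 hsub ?_
    refine mem_closure_iff_nhds.2 fun S hS => ?_
    obtain ⟨l, u, htlu, hlu⟩ :=
      mem_nhds_iff_exists_Ioo_subset.1 (Filter.inter_mem hS (isOpen_Ioo.mem_nhds ht))
    obtain ⟨τ, hτ, hr⟩ := hTC l u (htlu.1.trans htlu.2)
    exact ⟨τ, (hlu hτ).1, (hlu hτ).2, hr⟩
  have hIcc := closure_mono hIoo
  rw [closure_Ioo hab.ne, hcl.closure_eq] at hIcc
  exact ⟨hIcc (Set.left_mem_Icc.2 hab.le), hIcc (Set.right_mem_Icc.2 hab.le)⟩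

/-- There are no conjugate points: the block `Φ₁₂(t, s)` is invertible for `t ≠ s`. -/
lemma IsHamSol.isUnit_of_ne (hQpsd : ∀ t, (Q t).PosSemidef)
    {Γ : ℕ → ℝ → Matrix (Fin n) (Fin p) ℝ} (hΓ : IsCtrbMatSeq A B Γ)
    (hTC : ∀ t₀ t₁ : ℝ, t₀ < t₁ → ∃ t ∈ Set.Ioo t₀ t₁, (ctrbMat Γ t).rank = n)
    {Y Z : ℝ → Matrix (Fin n) (Fin n) ℝ} (h : IsHamSol A Q B Y Z) {s t : ℝ}
    (hY : Y s = 0) (hZ : Z s = 1) (hts : t ≠ s) : IsUnit (Y t) := by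
  rw [← Matrix.mulVec_injective_iff_isUnit]
  refine (injective_iff_map_eq_zero (Y t).mulVecLin).2 fun x hx => ?_
  rw [mulVecLin_apply] at hx
  have hs : Y s *ᵥ x = 0 := by rw [hY, zero_mulVec]
  have : Z s *ᵥ x = 0 := by
    rcases lt_or_gt_of_ne hts with hlt | hlt
    · exact (h.costate_eq_zero hQpsd hΓ hTC hlt x hx hs).2
    · exact (h.costate_eq_zero hQpsd hΓ hTC hlt x hs hx).1
  rwa [hZ, one_mulVec] at this

/-! ### Riccati solutions and the Hamiltonian system -/

/-- `V U⁻¹` solves the Riccati equation wherever `U` is invertible. -/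
lemma IsHamSol.isRiccatiSolAt {U V : ℝ → Matrix (Fin n) (Fin n) ℝ} (h : IsHamSol A Q B U V)
    {t : ℝ} (hu : IsUnit (U t)) : IsRiccatiSolAt A Q B (fun τ => V τ * (U τ)⁻¹) t := by
  refine (hasDerivAt_matrix_iff _ _ _).1 (hasDerivAt_congr_deriv
    (hasDerivAt_matrix_mul (h t).2 (hasDerivAt_nonsing_inv (h t).1 hu)) ?_)
  have i2 : U t * (U t)⁻¹ = 1 :=
    Matrix.mul_nonsing_inv _ ((Matrix.isUnit_iff_isUnit_det _).1 hu)
  beta_reduce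
  generalize B t * (B t)ᵀ = r
  generalize (U t)⁻¹ = w at *
  calc _ = -(A t)ᵀ * (V t * w) - V t * w * A t * (U t * w) + V t * w * r * (V t * w)
        - Q t * (U t * w) := by noncomm_ring
    _ = _ := by rw [i2, mul_one, mul_one]

/-- Along a Riccati solution through `V(s) U(s)⁻¹` the first component `U` stays invertible:
`V - P U` solves a linear equation and vanishes at `s`, so `V = P U`, and the Wronskian identity
becomes `Uᵀ (Z - Pᵀ Y) = 1`. -/
lemma IsHamSol.isUnit_of_riccati (hA : ∀ i j, Continuous fun t => A t i j)
    (hB : ∀ i j, Continuous fun t => B t i j)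
    {U V Y Z P : ℝ → Matrix (Fin n) (Fin n) ℝ} (h : IsHamSol A Q B U V)
    (hw : ∀ t, (U t)ᵀ * Z t - (V t)ᵀ * Y t = 1) {a b s t : ℝ}
    (hP : ∀ τ ∈ Set.Icc a b, IsRiccatiSolAt A Q B P τ) (hs : s ∈ Set.Ioo a b)
    (ht : t ∈ Set.Ioo a b) (hVs : V s = P s * U s) : IsUnit (U t) := by
  have hP' := fun τ hτ => (hasDerivAt_matrix_iff P _ τ).2 (hP τ hτ)
  have hPc : ContinuousOn P (Set.Icc a b) := fun τ hτ =>
    (hP' τ hτ).continuousAt.continuousWithinAt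
  have hAc : Continuous fun t => -(A t)ᵀ :=
    (continuous_matrix_of_entries fun i j => hA j i).neg
  have hBc : Continuous fun t => B t * (B t)ᵀ := by
    refine continuous_matrix_of_entries fun i j => ?_
    simp only [mul_apply, transpose_apply]
    exact continuous_finsetSum _ fun k _ => (hB i k).mul (hB j k)
  have hE := linear_ode_zero (K := fun τ => -(A τ)ᵀ + P τ * (B τ * (B τ)ᵀ))
    (E := fun τ => V τ - P τ * U τ) (hAc.continuousOn.add (hPc.mul hBc.continuousOn)) ?_ hs
    (by simp [hVs]) ht
  · have hV : V t = P t * U t := sub_eq_zero.1 hE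
    have h1 := hw t
    rw [hV, transpose_mul, mul_assoc, ← mul_sub] at h1
    have h2 : IsUnit (U t)ᵀ := IsUnit.of_mul_eq_one _ h1
    exact (Matrix.isUnit_transpose _).1 h2
  · intro τ hτ
    refine hasDerivAt_congr_deriv (hasDerivAt_matrix_sub (h τ).2
      (hasDerivAt_matrix_mul (hP' τ (Set.Ioo_subset_Icc_self hτ)) (h τ).1)) ?_
    generalize B τ * (B τ)ᵀ = r
    noncomm_ring

/-- Symmetry of `u⁻¹ y` for block columns `(u, v)`, `(y, z)` satisfying the symplectic identities:
`z = u⁻ᵀ + (v u⁻¹) y` with `v u⁻¹` symmetric, and `yᵀ z` is symmetric. -/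
lemma isSymm_inv_mul {u v y z : Matrix (Fin n) (Fin n) ℝ} (hu : IsUnit u)
    (huv : uᵀ * v = vᵀ * u) (hyz : yᵀ * z = zᵀ * y) (hw : uᵀ * z - vᵀ * y = 1) :
    (u⁻¹ * y)ᵀ = u⁻¹ * y := by
  have hdet : IsUnit u.det := (Matrix.isUnit_iff_isUnit_det _).1 hu
  have i2 : u * u⁻¹ = 1 := Matrix.mul_nonsing_inv _ hdet
  have i1 : u⁻¹ * u = 1 := Matrix.nonsing_inv_mul _ hdet
  have i3 : (u⁻¹)ᵀ * uᵀ = 1 := by rw [← transpose_mul, i2, transpose_one]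
  have i4 : uᵀ * (u⁻¹)ᵀ = 1 := by rw [← transpose_mul, i1, transpose_one]
  have hw' : zᵀ * u - yᵀ * v = 1 := by
    have := congrArg transpose hw
    simpa [transpose_sub, transpose_mul] using this
  have e1 : v * u⁻¹ = (u⁻¹)ᵀ * vᵀ := by
    calc v * u⁻¹ = ((u⁻¹)ᵀ * uᵀ) * v * u⁻¹ := by rw [i3, one_mul]
      _ = (u⁻¹)ᵀ * (uᵀ * v) * u⁻¹ := by simp only [mul_assoc]
      _ = (u⁻¹)ᵀ * vᵀ * (u * u⁻¹) := by rw [huv]; simp only [mul_assoc]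
      _ = _ := by rw [i2, mul_one]
  rw [transpose_mul]
  calc yᵀ * (u⁻¹)ᵀ = yᵀ * (u⁻¹)ᵀ * (uᵀ * z - vᵀ * y) := by rw [hw, mul_one]
    _ = yᵀ * ((u⁻¹)ᵀ * uᵀ) * z - yᵀ * ((u⁻¹)ᵀ * vᵀ) * y := by noncomm_ring
    _ = zᵀ * (u * u⁻¹) * y - yᵀ * (v * u⁻¹) * y := by rw [i3, ← e1, i2, mul_one, mul_one, hyz]
    _ = (zᵀ * u - yᵀ * v) * u⁻¹ * y := by noncomm_ring
    _ = _ := by rw [hw', one_mul]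

lemma IsHamSol.add_mul_const {U V Y Z : ℝ → Matrix (Fin n) (Fin n) ℝ} (h₁ : IsHamSol A Q B U V)
    (h₂ : IsHamSol A Q B Y Z) (C : Matrix (Fin n) (Fin n) ℝ) :
    IsHamSol A Q B (fun t => U t + Y t * C) (fun t => V t + Z t * C) := by
  refine fun t => ⟨?_, ?_⟩
  · refine hasDerivAt_congr_deriv ((h₁ t).1.add ((h₂ t).1.mul_const C)) ?_
    generalize B t * (B t)ᵀ = r
    noncomm_ring
  · refine hasDerivAt_congr_deriv ((h₁ t).2.add ((h₂ t).2.mul_const C)) ?_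
    noncomm_ring

lemma IsSTM.isHamSol {Φ : ℝ → ℝ → Matrix (Fin n ⊕ Fin n) (Fin n ⊕ Fin n) ℝ}
    (hΦ : IsSTM (fun t => fromBlocks (A t) (-(B t * (B t)ᵀ)) (-(Q t)) (-(A t)ᵀ)) Φ) (s : ℝ) :
    IsHamSol A Q B (fun t => (Φ t s).toBlocks₁₁) (fun t => (Φ t s).toBlocks₂₁) ∧
    IsHamSol A Q B (fun t => (Φ t s).toBlocks₁₂) (fun t => (Φ t s).toBlocks₂₂) := by
  have key : ∀ t i j, HasDerivAt (fun t' => Φ t' s i j)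
      ((fromBlocks (A t * (Φ t s).toBlocks₁₁ - (B t * (B t)ᵀ) * (Φ t s).toBlocks₂₁)
        (A t * (Φ t s).toBlocks₁₂ - (B t * (B t)ᵀ) * (Φ t s).toBlocks₂₂)
        (-(Q t * (Φ t s).toBlocks₁₁) - (A t)ᵀ * (Φ t s).toBlocks₂₁)
        (-(Q t * (Φ t s).toBlocks₁₂) - (A t)ᵀ * (Φ t s).toBlocks₂₂)) i j) t := by
    intro t i j
    refine (hΦ.2 s t i j).congr_deriv ?_
    conv_lhs => rw [← fromBlocks_toBlocks (Φ t s)]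
    rw [fromBlocks_multiply]
    simp only [Matrix.neg_mul, sub_eq_add_neg]
  exact ⟨fun t => ⟨(hasDerivAt_matrix_iff _ _ _).2 fun i j => key t (.inl i) (.inl j),
      (hasDerivAt_matrix_iff _ _ _).2 fun i j => key t (.inr i) (.inl j)⟩,
    fun t => ⟨(hasDerivAt_matrix_iff _ _ _).2 fun i j => key t (.inl i) (.inr j),
      (hasDerivAt_matrix_iff _ _ _).2 fun i j => key t (.inr i) (.inr j)⟩⟩

end Aux

theorem stmt_7 {n p : ℕ} (hn : 1 ≤ n) (hp : 1 ≤ p)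
    (A Q : ℝ → Matrix (Fin n) (Fin n) ℝ) (B : ℝ → Matrix (Fin n) (Fin p) ℝ)
    (hA : Continuous A) (hB : Continuous B) (hQ : Continuous Q)
    (hQpsd : ∀ t, (Q t).PosSemidef)
    (hAsm : ∀ i j, ContDiff ℝ (n - 1 : ℕ) fun t => A t i j)
    (hBsm : ∀ i j, ContDiff ℝ (n : ℕ) fun t => B t i j)
    (Γ : ℕ → ℝ → Matrix (Fin n) (Fin p) ℝ)
    (hΓ : IsCtrbMatSeq A B Γ)
    (hTC : ∀ t₀ t₁ : ℝ, t₀ < t₁ → ∃ t ∈ Set.Ioo t₀ t₁, (ctrbMat Γ t).rank = n)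
    (Φ : ℝ → ℝ → Matrix (Fin n ⊕ Fin n) (Fin n ⊕ Fin n) ℝ)
    (hΦ : IsSTM (fun t => fromBlocks (A t) (-(B t * (B t)ᵀ)) (-(Q t)) (-(A t)ᵀ)) Φ)
    (s : ℝ) (Ps : Matrix (Fin n) (Fin n) ℝ) (hPs : Psᵀ = Ps)
    (t₀ t₁ : EReal)
    (ht₀ : t₀ = sInf ((fun x : ℝ => (x : EReal)) ''
      {t : ℝ | t < s ∧ (Ps - -(((Φ t s).toBlocks₁₂)⁻¹ * (Φ t s).toBlocks₁₁)).PosDef}))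
    (ht₁ : t₁ = sSup ((fun x : ℝ => (x : EReal)) ''
      {t : ℝ | s < t ∧ (-(((Φ t s).toBlocks₁₂)⁻¹ * (Φ t s).toBlocks₁₁) - Ps).PosDef})) :
    (∃ P : ℝ → Matrix (Fin n) (Fin n) ℝ, P s = Ps ∧
      ∀ t : ℝ, t₀ < (t : EReal) → (t : EReal) < t₁ → IsRiccatiSolAt A Q B P t) ∧
    (∀ (a b : EReal) (P : ℝ → Matrix (Fin n) (Fin n) ℝ),
      a < (s : EReal) → (s : EReal) < b → P s = Ps →
      (∀ t : ℝ, a < (t : EReal) → (t : EReal) < b → IsRiccatiSolAt A Q B P t) →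
      t₀ ≤ a ∧ b ≤ t₁) := by
  have hQ' : ∀ t, (Q t)ᵀ = Q t := fun t => by simpa using (hQpsd t).1.eq
  have hA' : ∀ i j, Continuous fun t => A t i j := fun i j => hA.matrix_elem i j
  have hB' : ∀ i j, Continuous fun t => B t i j := fun i j => hB.matrix_elem i j
  obtain ⟨hX, hY⟩ := hΦ.isHamSol s
  have hXs : (Φ s s).toBlocks₁₁ = 1 := by rw [hΦ.1, ← fromBlocks_one, toBlocks_fromBlocks₁₁]
  have hYs : (Φ s s).toBlocks₁₂ = 0 := by rw [hΦ.1, ← fromBlocks_one, toBlocks_fromBlocks₁₂]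
  have hX2s : (Φ s s).toBlocks₂₁ = 0 := by rw [hΦ.1, ← fromBlocks_one, toBlocks_fromBlocks₂₁]
  have hZs : (Φ s s).toBlocks₂₂ = 1 := by rw [hΦ.1, ← fromBlocks_one, toBlocks_fromBlocks₂₂]
  obtain ⟨Y, hYeq⟩ : ∃ Y : ℝ → Matrix (Fin n) (Fin n) ℝ, ∀ t, (Φ t s).toBlocks₁₂ = Y t :=
    ⟨_, fun _ => rfl⟩
  obtain ⟨Z, hZeq⟩ : ∃ Z : ℝ → Matrix (Fin n) (Fin n) ℝ, ∀ t, (Φ t s).toBlocks₂₂ = Z t :=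
    ⟨_, fun _ => rfl⟩
  simp only [hYeq, hZeq] at hY hYs hZs ht₀ ht₁
  -- `(U, V) = Φ(·, s) (1, Ps)`, so that the Riccati solution is `V U⁻¹`
  obtain ⟨U, V, hU, hUX, hVX⟩ : ∃ U V : ℝ → Matrix (Fin n) (Fin n) ℝ, IsHamSol A Q B U V ∧
      (∀ t, U t = (Φ t s).toBlocks₁₁ + Y t * Ps) ∧ ∀ t, V t = (Φ t s).toBlocks₂₁ + Z t * Ps :=
    ⟨_, _, hX.add_mul_const hY Ps, fun _ => rfl, fun _ => rfl⟩
  have hUs : U s = 1 := by rw [hUX, hXs, hYs, zero_mul, add_zero]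
  have hVs : V s = Ps := by rw [hVX, hX2s, hZs, one_mul, zero_add]
  -- the three Wronskian identities
  have hw : ∀ t, (U t)ᵀ * Z t - (V t)ᵀ * Y t = 1 := fun t => by
    rw [hU.wronskian hQ' hY s t, hUs, hZs, hYs]; simp
  have huv : ∀ t, (U t)ᵀ * V t = (V t)ᵀ * U t := fun t => by
    rw [← sub_eq_zero, hU.wronskian hQ' hU s t, hUs, hVs]; simp [hPs]
  have hyz : ∀ t, (Y t)ᵀ * Z t = (Z t)ᵀ * Y t := fun t => by
    rw [← sub_eq_zero, hY.wronskian hQ' hY s t, hYs, hZs]; simp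
  have hw2 : ∀ t, (Y t)ᵀ * V t - (Z t)ᵀ * U t = (-1 : ℝ) • (1 : Matrix (Fin n) (Fin n) ℝ) :=
    fun t => by rw [hY.wronskian hQ' hU s t, hYs, hZs, hUs]; simp
  have hYu : ∀ t, t ≠ s → IsUnit (Y t) := fun t ht => hY.isUnit_of_ne hQpsd hΓ hTC hYs hZs ht
  -- away from `s`, the two matrices in the thresholds are `± Φ₁₂⁻¹ U`
  have hT : ∀ t, t ≠ s → (Y t)⁻¹ * U t = (Y t)⁻¹ * (Φ t s).toBlocks₁₁ + Ps := by
    intro t ht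
    have := Matrix.nonsing_inv_mul _ ((Matrix.isUnit_iff_isUnit_det _).1 (hYu t ht))
    rw [hUX, mul_add, ← mul_assoc, this, one_mul]
  have hT₀ : ∀ t, t ≠ s → Ps - -((Y t)⁻¹ * (Φ t s).toBlocks₁₁) = (Y t)⁻¹ * U t := by
    intro t ht
    rw [hT t ht]; abel
  have hT₁ : ∀ t, t ≠ s → -((Y t)⁻¹ * (Φ t s).toBlocks₁₁) - Ps = -((Y t)⁻¹ * U t) := by
    intro t ht
    rw [hT t ht]; abel
  have hmono : ∀ a b : ℝ, a ≤ b → s ∉ Set.Icc a b → ∀ x,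
      x ⬝ᵥ (((Y a)⁻¹ * U a) *ᵥ x) ≤ x ⬝ᵥ (((Y b)⁻¹ * U b) *ᵥ x) := by
    intro a b hab hs x
    refine le_of_hasDerivAt_nonneg (f := fun t => x ⬝ᵥ (((Y t)⁻¹ * U t) *ᵥ x)) hab
      (fun t ht => hasDerivAt_quadForm (hY.hasDerivAt_inv_mul hU
        (hYu t (by rintro rfl; exact hs ht)) (hyz t) (hw2 t)) x) (fun t ht => ?_)
    rw [neg_smul, one_smul, neg_neg]
    exact quadForm_congr_nonneg _ _ _
  have hunit : ∀ t, (∀ x, x ≠ 0 → x ⬝ᵥ (((Y t)⁻¹ * U t) *ᵥ x) ≠ 0) → IsUnit (U t) := by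
    intro t h
    rw [← Matrix.mulVec_injective_iff_isUnit]
    refine (injective_iff_map_eq_zero (U t).mulVecLin).2 fun x hx => ?_
    rw [mulVecLin_apply] at hx
    by_contra hx0
    exact h x hx0 (by rw [← mulVec_mulVec, hx, mulVec_zero, dotProduct_zero])
  refine ⟨⟨fun τ => V τ * (U τ)⁻¹, by simp [hUs, hVs], fun t h0 h1 =>
    hU.isRiccatiSolAt ?_⟩, ?_⟩
  · rcases lt_trichotomy t s with hts | rfl | hts
    · rw [ht₀, sInf_lt_iff] at h0
      obtain ⟨_, ⟨t', ⟨ht's, hpd⟩, rfl⟩, hlt⟩ := h0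
      have hlt : t' < t := by simpa using hlt
      rw [hT₀ t' ht's.ne] at hpd
      refine hunit t fun x hx => ?_
      have h1 := hmono t' t hlt.le (fun h => absurd h.2 (not_le.2 hts)) x
      have h2 : 0 < x ⬝ᵥ (((Y t')⁻¹ * U t') *ᵥ x) := by simpa using hpd.dotProduct_mulVec_pos hx
      exact (h2.trans_le h1).ne'
    · rw [hUs]; exact isUnit_one
    · rw [ht₁, lt_sSup_iff] at h1
      obtain ⟨_, ⟨t', ⟨ht's, hpd⟩, rfl⟩, hlt⟩ := h1
      have hlt : t < t' := by simpa using hlt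
      rw [hT₁ t' ht's.ne'] at hpd
      refine hunit t fun x hx => ?_
      have h1 := hmono t t' hlt.le (fun h => absurd h.1 (not_le.2 hts)) x
      have h2 : 0 < x ⬝ᵥ ((-((Y t')⁻¹ * U t')) *ᵥ x) := by
        simpa using hpd.dotProduct_mulVec_pos hx
      rw [neg_mulVec, dotProduct_neg] at h2
      exact (by linarith : x ⬝ᵥ (((Y t)⁻¹ * U t) *ᵥ x) < 0).ne
  · intro a b P has hsb hPs' hP
    have hUu : ∀ t : ℝ, a < t → (t : EReal) < b → IsUnit (U t) := by
      intro t hat htb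
      obtain ⟨a', haa', ha'⟩ := EReal.lt_iff_exists_real_btwn.1 (lt_min hat has)
      obtain ⟨b', hb', hbb'⟩ := EReal.lt_iff_exists_real_btwn.1 (max_lt htb hsb)
      rw [lt_min_iff, EReal.coe_lt_coe_iff, EReal.coe_lt_coe_iff] at ha'
      rw [max_lt_iff, EReal.coe_lt_coe_iff, EReal.coe_lt_coe_iff] at hb'
      refine hU.isUnit_of_riccati (P := P) hA' hB' hw (a := a') (b := b') (s := s)
        (fun τ hτ => hP τ (haa'.trans_le (by exact_mod_cast hτ.1))
          (lt_of_le_of_lt (by exact_mod_cast hτ.2) hbb')) ⟨ha'.2, hb'.2⟩ ⟨ha'.1, hb'.1⟩ ?_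
      rw [hVs, hUs, hPs', mul_one]
    -- `U⁻¹ Φ₁₂` vanishes at `s` and decreases
    have hW : ∀ c d : ℝ, a < c → (d : EReal) < b → c ≤ d → ∀ x,
        x ⬝ᵥ (((U d)⁻¹ * Y d) *ᵥ x) ≤ x ⬝ᵥ (((U c)⁻¹ * Y c) *ᵥ x) := by
      intro c d hac hdb hcd x
      have := le_of_hasDerivAt_nonneg (f := fun t => -(x ⬝ᵥ (((U t)⁻¹ * Y t) *ᵥ x))) hcd
        (fun t ht => (hasDerivAt_quadForm (hU.hasDerivAt_inv_mul hY
          (hUu t (hac.trans_le (by exact_mod_cast ht.1))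
            (lt_of_le_of_lt (by exact_mod_cast ht.2) hdb)) (huv t)
          (c := 1) (by rw [hw t, one_smul])) x).neg) (fun t ht => ?_)
      · simpa using this
      · rw [one_smul, neg_mulVec, dotProduct_neg, neg_neg]
        exact quadForm_congr_nonneg _ _ _
    have hWs : (U s)⁻¹ * Y s = 0 := by rw [hYs, mul_zero]
    have hWu : ∀ t : ℝ, a < t → (t : EReal) < b → t ≠ s →
        IsUnit ((U t)⁻¹ * Y t) ∧ ((U t)⁻¹ * Y t)⁻¹ = (Y t)⁻¹ * U t := by
      intro t hat htb hts
      have hu := hUu t hat htb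
      refine ⟨((Matrix.isUnit_nonsing_inv_iff).2 hu).mul (hYu t hts), ?_⟩
      rw [Matrix.mul_inv_rev, Matrix.nonsing_inv_nonsing_inv _
        ((Matrix.isUnit_iff_isUnit_det _).1 hu)]
    have hWh : ∀ t : ℝ, a < t → (t : EReal) < b → ((U t)⁻¹ * Y t).IsHermitian := by
      intro t hat htb
      have := isSymm_inv_mul (hUu t hat htb) (huv t) (hyz t) (hw t)
      rwa [Matrix.IsHermitian, conjTranspose_eq_transpose_of_trivial]
    constructor
    · by_contra! hlt
      obtain ⟨t, hat, htlt⟩ := EReal.lt_iff_exists_real_btwn.1 (lt_min hlt has)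
      rw [lt_min_iff, EReal.coe_lt_coe_iff] at htlt
      have htb : (t : EReal) < b := lt_trans (by exact_mod_cast htlt.2) hsb
      refine absurd htlt.1 (not_lt.2 ?_)
      rw [ht₀]
      refine sInf_le ⟨t, ⟨htlt.2, ?_⟩, rfl⟩
      obtain ⟨hwu, hwi⟩ := hWu t hat htb htlt.2.ne
      rw [hT₀ t htlt.2.ne, ← hwi]
      have hpsd : ((U t)⁻¹ * Y t).PosSemidef := by
        refine Matrix.PosSemidef.of_dotProduct_mulVec_nonneg (hWh t hat htb) fun x => ?_
        have := hW t s hat hsb htlt.2.le x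
        rw [hWs, zero_mulVec, dotProduct_zero] at this
        simpa using this
      exact (hpsd.posDef_iff_isUnit.2 hwu).inv
    · by_contra! hlt
      obtain ⟨t, htlt, htb⟩ := EReal.lt_iff_exists_real_btwn.1 (max_lt hlt hsb)
      rw [max_lt_iff, EReal.coe_lt_coe_iff] at htlt
      have hat : a < (t : EReal) := lt_trans has (by exact_mod_cast htlt.2)
      refine absurd htlt.1 (not_lt.2 ?_)
      rw [ht₁]
      refine le_sSup ⟨t, ⟨htlt.2, ?_⟩, rfl⟩
      obtain ⟨hwu, hwi⟩ := hWu t hat htb htlt.2.ne'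
      have hneg : (-((U t)⁻¹ * Y t))⁻¹ = -((Y t)⁻¹ * U t) := by
        rw [← hwi]
        refine Matrix.inv_eq_right_inv ?_
        rw [neg_mul_neg, Matrix.mul_nonsing_inv _ ((Matrix.isUnit_iff_isUnit_det _).1 hwu)]
      rw [hT₁ t htlt.2.ne', ← hneg]
      have hpsd : (-((U t)⁻¹ * Y t)).PosSemidef := by
        refine Matrix.PosSemidef.of_dotProduct_mulVec_nonneg (hWh t hat htb).neg fun x => ?_
        have := hW s t has htb htlt.2.le x
        rw [hWs, zero_mulVec, dotProduct_zero] at this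
        simpa [neg_mulVec] using this
      exact (hpsd.posDef_iff_isUnit.2 hwu.neg).inv
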